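/- arXiv:2511.08611 — 5 statements merged into one kernel-verified Lean document; each statement's English description precedes it below -/
import Mathlib

section
/- Let G be a weakly connected directed multigraph with finite nonempty node set and finite arrow set. If G admits a marking that is both live and safe, then G is strongly connected. -/
open Classical

variable {V A : Type}

/-- A directed path from `v` to `w`: a nonempty list of arrows chained
head-to-tail, starting at `v` and ending at `w`. -/
def PathFrom (s t : A → V) (v w : V) (p : List A) : Prop :=
  List.Chain' (fun a b => t a = s b) p ∧
    (p.map s).head? = some v ∧ (p.map t).getLast? = some w

/-- A directed circuit: a nonempty directed path that returns to its start. -/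
def IsCircuit (s t : A → V) (p : List A) : Prop :=
  ∃ v : V, PathFrom s t v v p

/-- Strong connectivity: a directed path between every ordered pair of
distinct nodes. -/
def StronglyConnected (s t : A → V) : Prop :=
  ∀ v w : V, v ≠ w → ∃ p : List A, PathFrom s t v w p

/-- Adjacency ignoring arrow direction. -/
def WeakAdj (s t : A → V) (v w : V) : Prop :=
  ∃ a : A, (s a = v ∧ t a = w) ∨ (s a = w ∧ t a = v)

/-- Weak connectivity: every pair of nodes is joined by an undirected path. -/
def WeaklyConnected (s t : A → V) : Prop :=
  ∀ v w : V, Relation.ReflTransGen (WeakAdj s t) v w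

/-- A node `v` is enabled in marking `M` if every in-arrow of `v` holds a token. -/
def Enabled (s t : A → V) (M : A → ℕ) (v : V) : Prop :=
  ∀ a : A, t a = v → 1 ≤ M a

/-- Firing node `v`: remove a token from each in-arrow, add one to each out-arrow. -/
noncomputable def fire (s t : A → V) (M : A → ℕ) (v : V) : A → ℕ :=
  fun a => M a - (if t a = v then 1 else 0) + (if s a = v then 1 else 0)

/-- One firing step between markings. -/
def Step (s t : A → V) (M M' : A → ℕ) : Prop :=
  ∃ v : V, Enabled s t M v ∧ M' = fire s t M v

/-- Reachability: final marking of some (possibly empty) firing sequence. -/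
def Reaches (s t : A → V) : (A → ℕ) → (A → ℕ) → Prop :=
  Relation.ReflTransGen (Step s t)

/-- A marking is live if from every reachable marking, every node can
eventually be enabled. -/
def Live (s t : A → V) (M : A → ℕ) : Prop :=
  ∀ (v : V) (M' : A → ℕ), Reaches s t M M' →
    ∃ M'' : A → ℕ, Reaches s t M' M'' ∧ Enabled s t M'' v

/-- A marking is safe if every reachable marking has at most one token per arrow. -/
def Safe (s t : A → V) (M : A → ℕ) : Prop :=
  ∀ M' : A → ℕ, Reaches s t M M' → ∀ a : A, M' a ≤ 1

/-- `ValidSeq s t M vs`: the list of nodes `vs` is a firing sequence from `M`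
(each node is enabled when it fires). -/
def ValidSeq (s t : A → V) : (A → ℕ) → List V → Prop
  | _, [] => True
  | M, v :: vs => Enabled s t M v ∧ ValidSeq s t (fire s t M v) vs

/-- The final marking of a firing sequence. -/
noncomputable def execute (s t : A → V) : (A → ℕ) → List V → (A → ℕ)
  | M, [] => M
  | M, v :: vs => execute s t (fire s t M v) vs

/-! Let `a` be an arrow from `u` to `v`, and suppose no directed path leads from `v` back to `u`.
Let `X` be the set of nodes reachable from `v`, so that no arrow leaves `X` and `u ∉ X`. A firing
sequence that ends with `u` enabled remains one when all firings in `X` are deleted, because those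
firings never supply tokens to nodes outside `X`. The shortened sequence does not consume tokens
from `a`, and firing `u` afterwards adds one. Liveness lets us repeat this, so the number of tokens
on `a` is unbounded. Hence in a live bounded marking every arrow can be traversed backwards by a
directed path, and weak connectivity becomes strong connectivity. -/

section Paths

variable {s t : A → V}

/-- Adjacency along an arrow; its reflexive transitive closure is reachability by a possibly empty
directed path. -/
def DirAdj (s t : A → V) (v w : V) : Prop :=
  ∃ a : A, s a = v ∧ t a = w

lemma dirAdj_source_target (a : A) : DirAdj s t (s a) (t a) :=
  ⟨a, rfl, rfl⟩

lemma PathFrom.singleton (a : A) : PathFrom s t (s a) (t a) [a] :=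
  ⟨List.isChain_singleton a, rfl, rfl⟩

lemma PathFrom.cons {a : A} {w : V} {p : List A} (hp : PathFrom s t (t a) w p) :
    PathFrom s t (s a) w (a :: p) := by
  obtain ⟨hchain, hhead, hlast⟩ := hp
  cases p with
  | nil => simp at hhead
  | cons b q =>
    have hab : t a = s b := by simpa using hhead.symm
    exact ⟨List.isChain_cons_cons.2 ⟨hab, hchain⟩, rfl, by simpa using hlast⟩

lemma exists_pathFrom_of_transGen {v w : V} (h : Relation.TransGen (DirAdj s t) v w) :
    ∃ p : List A, PathFrom s t v w p := by
  induction h using Relation.TransGen.head_induction_on with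
  | single hvw =>
    obtain ⟨a, rfl, rfl⟩ := hvw
    exact ⟨[a], .singleton a⟩
  | head hvu _ ih =>
    obtain ⟨a, rfl, rfl⟩ := hvu
    obtain ⟨p, hp⟩ := ih
    exact ⟨a :: p, hp.cons⟩

lemma stronglyConnected_of_reflTransGen
    (h : ∀ v w : V, Relation.ReflTransGen (DirAdj s t) v w) : StronglyConnected s t := by
  intro v w hne
  rcases Relation.reflTransGen_iff_eq_or_transGen.1 (h v w) with heq | hvw
  · exact absurd heq.symm hne
  · exact exists_pathFrom_of_transGen hvw

lemma WeaklyConnected.stronglyConnected (hweak : WeaklyConnected s t)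
    (hback : ∀ a : A, Relation.ReflTransGen (DirAdj s t) (t a) (s a)) :
    StronglyConnected s t := by
  refine stronglyConnected_of_reflTransGen fun v w =>
    Relation.reflTransGen_closed ?_ v w (hweak v w)
  rintro _ _ ⟨a, ⟨rfl, rfl⟩ | ⟨rfl, rfl⟩⟩
  · exact .single (dirAdj_source_target a)
  · exact hback a

end Paths

section Firing

variable {s t : A → V} {M N : A → ℕ}

lemma Enabled.mono {v : V} (hM : Enabled s t M v) (hMN : ∀ a : A, t a = v → M a ≤ N a) :
    Enabled s t N v :=
  fun a ha => (hM a ha).trans (hMN a ha)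

lemma fire_apply_of_ne {v : V} {a : A} (hs : s a ≠ v) (ht : t a ≠ v) : fire s t M v a = M a := by
  simp [fire, hs, ht]

lemma le_fire_apply {v : V} {a : A} (ht : t a ≠ v) : M a ≤ fire s t M v a := by
  simp [fire, ht]

lemma fire_source_apply {a : A} (ha : t a ≠ s a) : fire s t M (s a) a = M a + 1 := by
  simp [fire, ha]

lemma fire_congr_apply {v : V} {a : A} (h : M a = N a) : fire s t M v a = fire s t N v a := by
  simp only [fire, h]

lemma Enabled.step_fire {v : V} (hv : Enabled s t M v) : Step s t M (fire s t M v) :=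
  ⟨v, hv, rfl⟩

/- The witness `M'` is the result of deleting the firings of nodes in `X` from a firing sequence
that leads from `M` to `N`. -/
lemma Reaches.exists_eq_outside_and_le_inside {X : Set V} (hX : ∀ a : A, s a ∈ X → t a ∈ X)
    (h : Reaches s t M N) :
    ∃ M' : A → ℕ, Reaches s t M M' ∧ (∀ a : A, t a ∉ X → M' a = N a) ∧
      ∀ a : A, t a ∈ X → M a ≤ M' a := by
  induction h with
  | refl => exact ⟨M, .refl, fun _ _ => rfl, fun _ _ => le_rfl⟩
  | tail _ hstep ih =>
    obtain ⟨M', hreach, heq, hle⟩ := ih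
    obtain ⟨v, hv, rfl⟩ := hstep
    by_cases hvX : v ∈ X
    · refine ⟨M', hreach, fun a ha => ?_, hle⟩
      have hs : s a ≠ v := fun hav => ha (hX a (hav ▸ hvX))
      have ht : t a ≠ v := fun hav => ha (hav ▸ hvX)
      rw [heq a ha, fire_apply_of_ne hs ht]
    · have hv' : Enabled s t M' v := hv.mono fun a ha => (heq a (ha ▸ hvX)).ge
      refine ⟨fire s t M' v, hreach.tail hv'.step_fire, fun a ha => fire_congr_apply (heq a ha),
        fun a ha => (hle a ha).trans (le_fire_apply ?_)⟩
      exact fun hav => hvX (hav ▸ ha)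

end Firing

section LiveBounded

variable {s t : A → V} {M N : A → ℕ}

/-- A marking is bounded if the number of tokens on each arrow is bounded over all reachable
markings. The bound may depend on the arrow, which matters only for infinite arrow sets. -/
def Bounded (s t : A → V) (M : A → ℕ) : Prop :=
  ∀ a : A, ∃ k : ℕ, ∀ M' : A → ℕ, Reaches s t M M' → M' a ≤ k

lemma Safe.bounded (hsafe : Safe s t M) : Bounded s t M :=
  fun a => ⟨1, fun M' hM' => hsafe M' hM' a⟩

lemma Live.of_reaches (hlive : Live s t M) (hMN : Reaches s t M N) : Live s t N :=
  fun v M' hM' => hlive v M' (hMN.trans hM')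

lemma Live.exists_reaches_lt (hlive : Live s t M) {a : A}
    (ha : ¬ Relation.ReflTransGen (DirAdj s t) (t a) (s a)) :
    ∃ M' : A → ℕ, Reaches s t M M' ∧ M a < M' a := by
  let X : Set V := {v | Relation.ReflTransGen (DirAdj s t) (t a) v}
  have hX : ∀ b : A, s b ∈ X → t b ∈ X := fun b hb => hb.tail (dirAdj_source_target b)
  have htX : t a ∈ X := Relation.ReflTransGen.refl
  have hne : t a ≠ s a := fun h => ha (h ▸ htX)
  obtain ⟨N, hN, henabled⟩ := hlive (s a) M .refl
  obtain ⟨M', hM', heq, hle⟩ := hN.exists_eq_outside_and_le_inside hX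
  have henabled' : Enabled s t M' (s a) := henabled.mono fun b hb => (heq b (hb ▸ ha)).ge
  refine ⟨fire s t M' (s a), hM'.tail henabled'.step_fire, ?_⟩
  calc M a ≤ M' a := hle a htX
    _ < M' a + 1 := Nat.lt_succ_self _
    _ = fire s t M' (s a) a := (fire_source_apply hne).symm

lemma Live.exists_reaches_ge (hlive : Live s t M) {a : A}
    (ha : ¬ Relation.ReflTransGen (DirAdj s t) (t a) (s a)) (n : ℕ) :
    ∃ M' : A → ℕ, Reaches s t M M' ∧ n ≤ M' a := by
  induction n with
  | zero => exact ⟨M, .refl, Nat.zero_le _⟩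
  | succ n ih =>
    obtain ⟨N, hN, hn⟩ := ih
    obtain ⟨M', hM', hlt⟩ := (hlive.of_reaches hN).exists_reaches_lt ha
    exact ⟨M', hN.trans hM', hn.trans_lt hlt⟩

lemma Live.reflTransGen_target_source (hlive : Live s t M) (hbdd : Bounded s t M) (a : A) :
    Relation.ReflTransGen (DirAdj s t) (t a) (s a) := by
  by_contra ha
  obtain ⟨k, hk⟩ := hbdd a
  obtain ⟨M', hM', hlt⟩ := hlive.exists_reaches_ge ha (k + 1)
  exact absurd (hk M' hM') (Nat.not_le.2 hlt)

end LiveBounded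

theorem stmt_1_general (s t : A → V) (hweak : WeaklyConnected s t) (M : A → ℕ)
    (hlive : Live s t M) (hbdd : Bounded s t M) : StronglyConnected s t :=
  hweak.stronglyConnected (hlive.reflTransGen_target_source hbdd)

/-- A weakly connected directed multigraph (finite nonempty node
set, finite arrow set) admitting a live and safe marking is strongly connected. -/
theorem stmt_1 {V A : Type} [Fintype V] [Nonempty V] [Fintype A]
    (s t : A → V)
    (hweak : WeaklyConnected s t)
    (M : A → ℕ) (hlive : Live s t M) (hsafe : Safe s t M) :
    StronglyConnected s t :=
  stmt_1_general s t hweak M hlive hsafe.bounded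
end

section
/- Let G be a directed multigraph with finite nonempty node set and finite arrow set that admits a marking which is both live and safe. Then every arrow of G belongs to a directed circuit. -/
open Classical

variable {V A : Type}

/-!
Suppose the arrow `a` lies on no circuit, and let `U` be the set of sources of the directed paths
whose last arrow is `a`. Every arrow into `U` starts in `U`, so firing a node outside `U` does not
touch the arrows into `U`; deleting all such firings from a firing sequence therefore leaves a
firing sequence. As `s a ∈ U`, liveness lets `s a` fire over and over using nodes of `U` alone, and
as `t a ∉ U`, no token ever leaves `a`. So `a` accumulates arbitrarily many tokens.
-/

variable {s t : A → V} {M M' N : A → ℕ} {U : Set V} {S : Set A} {a b : A} {v : V}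

/-- Some directed path has first arrow `a` and last arrow `b`; every arrow leads to itself. -/
def LeadsTo (s t : A → V) : A → A → Prop :=
  Relation.ReflTransGen fun b c => t b = s c

/-- The set of nodes from which some directed path has last arrow `a`. -/
def upstream (s t : A → V) (a : A) : Set V :=
  s '' {b | LeadsTo s t b a}

/-- No arrow enters `U` from outside, so the tokens on the arrows into `U` depend on the firings
in `U` only. -/
def UpstreamClosed (s t : A → V) (U : Set V) : Prop :=
  ∀ b, t b ∈ U → s b ∈ U

/-- Liveness of the single node `v`: from every marking reachable from `M`, some marking enabling
`v` is reachable. Thus `Live s t M` says that every node is live. -/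
def LiveAt (s t : A → V) (M : A → ℕ) (v : V) : Prop :=
  ∀ M', Reaches s t M M' → ∃ M'', Reaches s t M' M'' ∧ Enabled s t M'' v

theorem LeadsTo.exists_pathFrom (h : LeadsTo s t a b) :
    ∃ p, PathFrom s t (s a) (t b) p ∧ b ∈ p := by
  obtain ⟨l, hchain, hlast⟩ := List.exists_isChain_cons_of_relationReflTransGen h
  refine ⟨a :: l, ⟨hchain, by simp, ?_⟩, hlast ▸ List.getLast_mem _⟩
  rw [List.getLast?_map, List.getLast?_eq_some_getLast (List.cons_ne_nil a l), hlast,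
    Option.map_some]

theorem source_mem_upstream : s a ∈ upstream s t a :=
  ⟨a, Relation.ReflTransGen.refl, rfl⟩

theorem upstreamClosed_upstream : UpstreamClosed s t (upstream s t a) := by
  rintro b ⟨c, hca, hcb⟩
  exact ⟨b, Relation.ReflTransGen.head hcb.symm hca, rfl⟩

theorem exists_isCircuit_of_target_mem_upstream (h : t a ∈ upstream s t a) :
    ∃ p, IsCircuit s t p ∧ a ∈ p := by
  obtain ⟨c, hca, hc⟩ := h
  obtain ⟨p, hp, hap⟩ := hca.exists_pathFrom
  exact ⟨p, ⟨t a, hc ▸ hp⟩, hap⟩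

theorem Enabled.of_eqOn (hM : Enabled s t M v) (h : Set.EqOn M N (t ⁻¹' U)) (hv : v ∈ U) :
    Enabled s t N v :=
  fun b hb => h (hb ▸ hv : t b ∈ U) ▸ hM b hb

theorem le_fire (h : t a ≠ v) : M a ≤ fire s t M v a := by
  simp [fire, h]

theorem fire_source (h : t a ≠ s a) : fire s t M (s a) a = M a + 1 := by
  simp [fire, h]

theorem fire_eqOn_fire (h : Set.EqOn M N S) :
    Set.EqOn (fire s t M v) (fire s t N v) S :=
  fun b hb => by simp only [fire, h hb]

theorem UpstreamClosed.fire_eqOn (hU : UpstreamClosed s t U) (hv : v ∉ U) :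
    Set.EqOn (fire s t M v) M (t ⁻¹' U) := by
  intro b hb
  have ht : t b ≠ v := fun h => hv (h ▸ hb)
  have hs : s b ≠ v := fun h => hv (h ▸ hU b hb)
  simp [fire, ht, hs]

theorem UpstreamClosed.exists_reaches_eqOn (hU : UpstreamClosed s t U)
    (hMN : Set.EqOn M N (t ⁻¹' U)) (h : Reaches s t M M') :
    ∃ N', Reaches s t N N' ∧ Set.EqOn M' N' (t ⁻¹' U) ∧ ∀ a, t a ∉ U → N a ≤ N' a := by
  induction h with
  | refl => exact ⟨N, Relation.ReflTransGen.refl, hMN, fun _ _ => le_rfl⟩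
  | tail _ hstep ih =>
    obtain ⟨N', hN', hagree, hle⟩ := ih
    obtain ⟨v, hv, rfl⟩ := hstep
    by_cases hvU : v ∈ U
    · refine ⟨fire s t N' v, hN'.tail ⟨v, hv.of_eqOn hagree hvU, rfl⟩,
        fire_eqOn_fire hagree, fun a ha => ?_⟩
      exact (hle a ha).trans (le_fire fun h => ha (h ▸ hvU))
    · exact ⟨N', hN', (hU.fire_eqOn hvU).trans hagree, hle⟩

theorem LiveAt.exists_reaches_lt (hlive : LiveAt s t M (s a)) (hU : UpstreamClosed s t U)
    (hs : s a ∈ U) (ht : t a ∉ U) (hMN : Reaches s t M N) :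
    ∃ N', Reaches s t M N' ∧ N a < N' a := by
  obtain ⟨M', hNM', hM'⟩ := hlive N hMN
  obtain ⟨N', hNN', hagree, hle⟩ := hU.exists_reaches_eqOn (Set.eqOn_refl N _) hNM'
  refine ⟨fire s t N' (s a), (hMN.trans hNN').tail ⟨s a, hM'.of_eqOn hagree hs, rfl⟩, ?_⟩
  have hne : t a ≠ s a := fun h => ht (h ▸ hs)
  rw [fire_source hne]
  exact Nat.lt_succ_of_le (hle a ht)

theorem LiveAt.exists_reaches_le (hlive : LiveAt s t M (s a)) (hU : UpstreamClosed s t U)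
    (hs : s a ∈ U) (ht : t a ∉ U) (k : ℕ) : ∃ N, Reaches s t M N ∧ k ≤ N a := by
  induction k with
  | zero => exact ⟨M, Relation.ReflTransGen.refl, Nat.zero_le _⟩
  | succ k ih =>
    obtain ⟨N, hN, hk⟩ := ih
    obtain ⟨N', hN', hlt⟩ := hlive.exists_reaches_lt hU hs ht hN
    exact ⟨N', hN', hk.trans_lt hlt⟩

theorem stmt_2_general {k : ℕ} (hlive : LiveAt s t M (s a))
    (hbdd : ∀ M', Reaches s t M M' → M' a ≤ k) : ∃ p, IsCircuit s t p ∧ a ∈ p := by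
  refine exists_isCircuit_of_target_mem_upstream (by_contra fun ht => ?_)
  obtain ⟨N, hN, hk⟩ :=
    hlive.exists_reaches_le upstreamClosed_upstream source_mem_upstream ht (k + 1)
  exact (hbdd N hN).not_gt hk

/-- In a directed multigraph (finite nonempty node set, finite
arrow set) admitting a live and safe marking, every arrow belongs to a
directed circuit. -/
theorem stmt_2 {V A : Type} [Fintype V] [Nonempty V] [Fintype A]
    (s t : A → V)
    (M : A → ℕ) (hlive : Live s t M) (hsafe : Safe s t M) :
    ∀ a : A, ∃ p : List A, IsCircuit s t p ∧ a ∈ p := by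
  intro a
  exact stmt_2_general (hlive (s a)) fun M' hM' => hsafe M' hM' a
end

section
/- Let G be a directed multigraph with finite nonempty node set and finite arrow set, let M be a marking of G that is both live and safe, and let v₁,…,vₙ (with markings M = M₀, M₁, …, Mₙ) be a firing sequence from M. Suppose node v fires at positions i and j of the sequence with i < j and with no occurrence of v at any position strictly between i and j. Then for every node w ≠ v such that there is at least one arrow a with s(a) = w and t(a) = v, the node w occurs exactly once among the positions strictly between i and j. -/
open Classical

variable {V A : Type}

/-!
Along a firing sequence, the tokens on an arrow change by the number of firings of its source `w`
minus the number of firings of its target `v`. Just before each firing of `v` the arrow carries a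
token, and by safety exactly one. So between two such moments `w` fires as often as `v`, and the
only firing of `v` from `i` up to but excluding `j` is the one at `i`.
-/

section FiringSequences

variable {s t : A → V} {M : A → ℕ} {u : V} {us vs : List V}

theorem fire_add_target (h : Enabled s t M u) (a : A) :
    fire s t M u a + (if t a = u then 1 else 0) = M a + (if s a = u then 1 else 0) := by
  have hpos := h a
  unfold fire
  split_ifs at * <;> grind

theorem execute_append (s t : A → V) (M : A → ℕ) (us vs : List V) :
    execute s t M (us ++ vs) = execute s t (execute s t M us) vs := by
  induction us generalizing M with
  | nil => rfl
  | cons u _ ih => exact ih (fire s t M u)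

theorem validSeq_append :
    ValidSeq s t M (us ++ vs) ↔ ValidSeq s t M us ∧ ValidSeq s t (execute s t M us) vs := by
  induction us generalizing M with
  | nil => simp [ValidSeq, execute]
  | cons _ _ ih => simp only [List.cons_append, ValidSeq, execute, ih, and_assoc]

theorem execute_take_succ {k : ℕ} (hk : vs[k]? = some u) :
    execute s t M (vs.take (k + 1)) = fire s t (execute s t M (vs.take k)) u := by
  rw [List.take_add_one, hk, execute_append]
  rfl

namespace ValidSeq

theorem reaches_execute (h : ValidSeq s t M vs) : Reaches s t M (execute s t M vs) := by
  induction vs generalizing M with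
  | nil => exact .refl
  | cons u _ ih => exact .head ⟨u, h.1, rfl⟩ (ih h.2)

theorem take (h : ValidSeq s t M vs) (k : ℕ) : ValidSeq s t M (vs.take k) :=
  (validSeq_append.1 ((vs.take_append_drop k).symm ▸ h)).1

theorem enabled_execute_take (h : ValidSeq s t M vs) {k : ℕ} (hk : vs[k]? = some u) :
    Enabled s t (execute s t M (vs.take k)) u := by
  obtain ⟨hlt, rfl⟩ := List.getElem?_eq_some_iff.1 hk
  rw [← vs.take_append_drop k, List.drop_eq_getElem_cons hlt] at h
  exact (validSeq_append.1 h).2.1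

theorem execute_take_succ_add_target (h : ValidSeq s t M vs) (a : A) (k : ℕ) :
    execute s t M (vs.take (k + 1)) a + (if vs[k]? = some (t a) then 1 else 0) =
      execute s t M (vs.take k) a + (if vs[k]? = some (s a) then 1 else 0) := by
  cases hk : vs[k]? with
  | none => simp [List.take_add_one, hk]
  | some u =>
    simpa only [execute_take_succ hk, Option.some.injEq, eq_comm] using
      fire_add_target (h.enabled_execute_take hk) a

theorem execute_take_add_card_target (h : ValidSeq s t M vs) (a : A) {i j : ℕ} (hij : i ≤ j) :
    execute s t M (vs.take j) a + ((Finset.Ico i j).filter (fun k => vs[k]? = some (t a))).card =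
      execute s t M (vs.take i) a +
        ((Finset.Ico i j).filter (fun k => vs[k]? = some (s a))).card := by
  simp only [Finset.card_filter]
  induction j, hij using Nat.le_induction with
  | base => simp
  | succ j hij ih =>
    rw [Finset.sum_Ico_succ_top hij, Finset.sum_Ico_succ_top hij]
    linarith [h.execute_take_succ_add_target a j]

theorem execute_take_eq_one {a : A} (h : ValidSeq s t M vs)
    (hsafe : ∀ M', Reaches s t M M' → M' a ≤ 1) {k : ℕ} (hk : vs[k]? = some (t a)) :
    execute s t M (vs.take k) a = 1 :=
  le_antisymm (hsafe _ (h.take k).reaches_execute) (h.enabled_execute_take hk a rfl)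

end ValidSeq

end FiringSequences

theorem stmt_4_general (s t : A → V) (M : A → ℕ) (a : A)
    (hsafe : ∀ M', Reaches s t M M' → M' a ≤ 1)
    (vs : List V) (hseq : ValidSeq s t M vs) (i j : ℕ) (hij : i < j)
    (hi : vs[i]? = some (t a)) (hj : vs[j]? = some (t a))
    (hmid : ∀ k, i < k → k < j → vs[k]? ≠ some (t a)) (hloop : s a ≠ t a) :
    ((Finset.Ioo i j).filter (fun k => vs[k]? = some (s a))).card = 1 := by
  have hbalance := hseq.execute_take_add_card_target a hij.le
  rw [hseq.execute_take_eq_one hsafe hi, hseq.execute_take_eq_one hsafe hj,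
    Nat.add_left_cancel_iff, ← Finset.Ioo_insert_left hij] at hbalance
  have htarget : (insert i (Finset.Ioo i j)).filter (fun k => vs[k]? = some (t a)) = {i} := by
    rw [Finset.filter_insert, if_pos hi, Finset.filter_false_of_mem, insert_empty_eq]
    exact fun k hk => hmid k (Finset.mem_Ioo.1 hk).1 (Finset.mem_Ioo.1 hk).2
  have hsource : (insert i (Finset.Ioo i j)).filter (fun k => vs[k]? = some (s a)) =
      (Finset.Ioo i j).filter (fun k => vs[k]? = some (s a)) := by
    rw [Finset.filter_insert, if_neg (by simpa [hi] using hloop.symm)]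
  rw [← hsource, ← hbalance, htarget, Finset.card_singleton]

/-- In a firing sequence from a live and safe marking, between two
consecutive firings of a node `v` (positions `i < j`, no `v` strictly between),
every node `w ≠ v` that has an arrow into `v` fires exactly once strictly
between positions `i` and `j`. -/
theorem stmt_4 {V A : Type} [Fintype V] [Nonempty V] [Fintype A]
    (s t : A → V)
    (M : A → ℕ) (hlive : Live s t M) (hsafe : Safe s t M)
    (vs : List V) (hseq : ValidSeq s t M vs)
    (v : V) (i j : ℕ) (hij : i < j) (hjlen : j < vs.length)
    (hvi : vs[i]? = some v) (hvj : vs[j]? = some v)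
    (hmid : ∀ k : ℕ, i < k → k < j → vs[k]? ≠ some v)
    (w : V) (hwv : w ≠ v) (harrow : ∃ a : A, s a = w ∧ t a = v) :
    ((Finset.Ioo i j).filter (fun k => vs[k]? = some w)).card = 1 := by
  obtain ⟨a, rfl, rfl⟩ := harrow
  exact stmt_4_general s t M a (fun M' h => hsafe M' h a) vs hseq i j hij hvi hvj hmid hwv
end

section
/- Let G be a directed multigraph with finite nonempty node set and finite arrow set, let C = (a₁,…,aₖ) be a directed cycle in G, let M₀ be a marking of G, and let M be any marking reachable from M₀. Then the total token count of C is invariant: Σᵢ M(aᵢ) = Σᵢ M₀(aᵢ). -/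
open Classical

variable {V A : Type}

/-- A directed cycle: a circuit with pairwise distinct arrows and pairwise
distinct nodes. -/
def IsCycle (s t : A → V) (p : List A) : Prop :=
  IsCircuit s t p ∧ p.Nodup ∧ (p.map s).Nodup

/-!
Along a circuit every node occurs equally often as a source and as a target, since the list of
targets is the list of sources rotated by one place. Firing `v` removes one token for each
occurrence of `v` as a target and adds one for each occurrence as a source, so the total on the
circuit is unchanged.
-/

section

variable {s t : A → V} {M M' : A → ℕ} {v w : V} {p : List A}

theorem PathFrom.map_source_append_eq_cons_map_target (h : PathFrom s t v w p) :
    p.map s ++ [w] = v :: p.map t := by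
  induction p generalizing v with
  | nil => simp [PathFrom] at h
  | cons a q ih =>
    obtain ⟨hchain, hsource, htarget⟩ := h
    obtain rfl : s a = v := by simpa using hsource
    cases q with
    | nil =>
      obtain rfl : t a = w := by simpa using htarget
      rfl
    | cons b r =>
      obtain ⟨hab, hchain⟩ := List.isChain_cons_cons.mp hchain
      have htail : PathFrom s t (t a) w (b :: r) :=
        ⟨hchain, by simp [hab], by simpa using htarget⟩
      exact congrArg (s a :: ·) (ih htail)

theorem IsCircuit.map_source_perm_map_target (h : IsCircuit s t p) :
    (p.map s).Perm (p.map t) := by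
  obtain ⟨v, hpath⟩ := h
  refine List.Perm.cons_inv (a := v) ?_
  rw [← hpath.map_source_append_eq_cons_map_target]
  exact (List.perm_append_singleton v (p.map s)).symm

-- Stated with both sides moved, since the subtraction in `fire` truncates at an unenabled node.
theorem Enabled.fire_apply_add (h : Enabled s t M v) (a : A) :
    fire s t M v a + (if t a = v then 1 else 0) = M a + (if s a = v then 1 else 0) := by
  have htokens : (if t a = v then 1 else 0) ≤ M a := by
    split_ifs with hav
    exacts [h a hav, Nat.zero_le _]
  simp only [fire]
  omega

theorem Enabled.sum_map_fire_add_count (h : Enabled s t M v) (p : List A) :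
    (p.map (fire s t M v)).sum + (p.map t).count v = (p.map M).sum + (p.map s).count v := by
  induction p with
  | nil => rfl
  | cons a q ih =>
    have hhead := h.fire_apply_add a
    simp only [List.map_cons, List.sum_cons, List.count_cons, beq_iff_eq]
    omega

theorem Step.sum_map_eq_of_perm (hstep : Step s t M M') (hperm : (p.map s).Perm (p.map t)) :
    (p.map M').sum = (p.map M).sum := by
  obtain ⟨v, henabled, rfl⟩ := hstep
  have hsum := henabled.sum_map_fire_add_count p
  rw [hperm.count_eq v] at hsum
  exact Nat.add_right_cancel hsum

theorem Reaches.sum_map_eq_of_perm (hreach : Reaches s t M M') (hperm : (p.map s).Perm (p.map t)) :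
    (p.map M').sum = (p.map M).sum := by
  induction hreach with
  | refl => rfl
  | tail _ hstep ih => exact (hstep.sum_map_eq_of_perm hperm).trans ih

end

theorem stmt_8_general {V A : Type} {s t : A → V} {p : List A} (hcircuit : IsCircuit s t p)
    {M₀ M : A → ℕ} (hreach : Reaches s t M₀ M) :
    (p.map M).sum = (p.map M₀).sum :=
  hreach.sum_map_eq_of_perm hcircuit.map_source_perm_map_target

/-- The total token count on a directed cycle is invariant under
reachability. -/
theorem stmt_8 {V A : Type} [Fintype V] [Nonempty V] [Fintype A]
    (s t : A → V)
    (p : List A) (hcyc : IsCycle s t p)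
    (M₀ M : A → ℕ) (hreach : Reaches s t M₀ M) :
    (p.map M).sum = (p.map M₀).sum :=
  stmt_8_general hcyc.1 hreach
end

section
/- Let G be a directed multigraph with finite nonempty node set and finite arrow set, let M₀ be a safe marking of G with M₀(a) ≤ 1 for all arrows a, and let v₁,…,vₙ together with markings M₀, M₁, …, Mₙ be a firing sequence from M₀. Then for every arrow a with s(a) ≠ t(a), the number of indices i with vᵢ = s(a) and the number of indices i with vᵢ = t(a) differ by at most 1. -/
open Classical

variable {V A : Type}

/-- Enabledness is what makes the truncated subtraction in `fire` exact. -/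
theorem Enabled.cast_fire_apply {s t : A → V} {M : A → ℕ} {v : V} (hv : Enabled s t M v) (a : A) :
    (fire s t M v a : ℤ) = M a + (if v = s a then 1 else 0) - (if v = t a then 1 else 0) := by
  have token_consumed : (if t a = v then 1 else 0) ≤ M a := by
    split_ifs with hta
    · exact hv a hta
    · exact Nat.zero_le _
  simp only [fire, eq_comm (a := v)]
  push_cast [token_consumed]
  ring

theorem ValidSeq.reaches_execute_s9 {s t : A → V} {M : A → ℕ} {vs : List V}
    (hvs : ValidSeq s t M vs) : Reaches s t M (execute s t M vs) := by
  induction vs generalizing M with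
  | nil => exact .refl
  | cons v vs ih =>
    obtain ⟨hv, hvs⟩ := hvs
    exact .head ⟨v, hv, rfl⟩ (ih hvs)

theorem ValidSeq.cast_execute_apply {s t : A → V} {M : A → ℕ} {vs : List V}
    (hvs : ValidSeq s t M vs) (a : A) :
    (execute s t M vs a : ℤ) = M a + vs.count (s a) - vs.count (t a) := by
  induction vs generalizing M with
  | nil => simp [execute]
  | cons v vs ih =>
    obtain ⟨hv, hvs⟩ := hvs
    calc (execute s t (fire s t M v) vs a : ℤ)
        = fire s t M v a + vs.count (s a) - vs.count (t a) := ih hvs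
      _ = M a + (v :: vs).count (s a) - (v :: vs).count (t a) := by
        simp only [hv.cast_fire_apply, List.count_cons, beq_iff_eq]
        push_cast
        ring

theorem stmt_9_general {s t : A → V} {M : A → ℕ} {a : A} {k : ℕ}
    (hbound : ∀ M' : A → ℕ, Reaches s t M M' → M' a ≤ k)
    {vs : List V} (hvs : ValidSeq s t M vs) :
    |(vs.count (s a) : ℤ) - (vs.count (t a) : ℤ)| ≤ k := by
  have initial_le : M a ≤ k := hbound M .refl
  have final_le : execute s t M vs a ≤ k := hbound _ hvs.reaches_execute_s9
  have balance := hvs.cast_execute_apply a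
  rw [abs_le]
  constructor <;> omega

/-- Along any firing sequence from a safe marking with at most one
token per arrow, for every non-loop arrow `a` the numbers of firings of its
source and of its target differ by at most 1. -/
theorem stmt_9 {V A : Type} [Fintype V] [Nonempty V] [Fintype A]
    (s t : A → V)
    (M₀ : A → ℕ) (hsafe : Safe s t M₀) (hM₀ : ∀ a : A, M₀ a ≤ 1)
    (vs : List V) (hseq : ValidSeq s t M₀ vs)
    (a : A) (hne : s a ≠ t a) :
    |(vs.count (s a) : ℤ) - (vs.count (t a) : ℤ)| ≤ 1 := by
  exact_mod_cast stmt_9_general (fun M hM => hsafe M hM a) hseq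
end
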